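/- Let k ∈ ℕ₀, m ∈ ℤ, M ∈ ℕ and n ∈ ℕ₀. Then 𝒞_k · H_{2k+1,m,M}(n) = c_{k,m,M}(4n) − Σ_{j=1}^{k} d_{k,j} Σ_{ℓ=1}^{j} (−1)^{j+ℓ} binom(j, ℓ) (4n)^ℓ H_{2k−2ℓ+1,m,M}(n), where d_{k,j} := (−1)^j binom(k+1/2, j) binom(k+1/2, k−j) and 𝒞_k := Σ_{j=0}^{k} (−1)^j d_{k,j}; moreover 𝒞_k > 0. -/

import Mathlib

open scoped BigOperators

namespace HurwitzAP

/-- Positive definite integral binary quadratic forms `a x² + b x y + c y²`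
of discriminant `b² - 4 a c = -n`, encoded as triples `(a, b, c)`. -/
def QF (n : ℤ) : Type :=
  {f : ℤ × ℤ × ℤ // 0 < f.1 ∧ f.2.1 ^ 2 - 4 * f.1 * f.2.2 = -n}

/-- The right action of `SL₂(ℤ)` on binary quadratic forms by linear substitution of
variables. -/
def act (γ : Matrix.SpecialLinearGroup (Fin 2) ℤ) (f : ℤ × ℤ × ℤ) : ℤ × ℤ × ℤ :=
  (f.1 * (γ.1 0 0) ^ 2 + f.2.1 * (γ.1 0 0) * (γ.1 1 0) + f.2.2 * (γ.1 1 0) ^ 2,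
   2 * f.1 * (γ.1 0 0) * (γ.1 0 1) + f.2.1 * ((γ.1 0 0) * (γ.1 1 1) + (γ.1 0 1) * (γ.1 1 0))
     + 2 * f.2.2 * (γ.1 1 0) * (γ.1 1 1),
   f.1 * (γ.1 0 1) ^ 2 + f.2.1 * (γ.1 0 1) * (γ.1 1 1) + f.2.2 * (γ.1 1 1) ^ 2)

/-- `SL₂(ℤ)`-equivalence of binary quadratic forms of discriminant `-n`. -/
def qfRel (n : ℤ) (f g : QF n) : Prop :=
  ∃ γ : Matrix.SpecialLinearGroup (Fin 2) ℤ, g.1 = act γ f.1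

open Classical in
/-- The weight with which an `SL₂(ℤ)`-class of forms is counted: `1/2` for classes containing
a form `a(x² + y²)`, `1/3` for classes containing a form `a(x² + xy + y²)`, and `1` otherwise. -/
noncomputable def weight (n : ℤ) (c : Quot (qfRel n)) : ℝ :=
  if ∃ f : QF n, Quot.mk _ f = c ∧ f.1.2.1 = 0 ∧ f.1.2.2 = f.1.1 then 1 / 2
  else if ∃ f : QF n, Quot.mk _ f = c ∧ f.1.2.1 = f.1.1 ∧ f.1.2.2 = f.1.1 then 1 / 3
  else 1

/-- The Hurwitz class number `H(n)`: the number of `SL₂(ℤ)`-classes of positive definite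
integral binary quadratic forms of discriminant `-n`, weighted as in `weight`;
`H(0) = -1/12` and `H(n) = 0` for `n < 0`. -/
noncomputable def H (n : ℤ) : ℝ :=
  if n = 0 then -1 / 12
  else if n < 0 then 0
  else ∑ᶠ c : Quot (qfRel n), weight n c

/-- `H_{ν,m,M}(n) = Σ_{t ≡ m (mod M)} H(4n - t²) tᵛ`. -/
noncomputable def Hs (ν : ℕ) (m : ℤ) (M : ℕ) (n : ℕ) : ℝ :=
  ∑ᶠ t : ℤ, if (M : ℤ) ∣ (t - m) then H (4 * (n : ℤ) - t ^ 2) * (t : ℝ) ^ ν else 0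

/-- The generalized binomial coefficient `binom(x, j) = x(x-1)⋯(x-j+1)/j!`. -/
noncomputable def genBinom (x : ℝ) (j : ℕ) : ℝ :=
  (∏ i ∈ Finset.range j, (x - i)) / (Nat.factorial j)

/-- `c_{k,m,M}(n)`, the `n`-th Fourier coefficient of the Rankin–Cohen bracket
`[𝓗, θ_{1,m,M}]_k`. -/
noncomputable def cRC (k : ℕ) (m : ℤ) (M : ℕ) (n : ℕ) : ℝ :=
  ∑ j ∈ Finset.range (k + 1),
    (-1 : ℝ) ^ j * genBinom ((k : ℝ) + 1 / 2) (k - j) * genBinom ((k : ℝ) + 1 / 2) j *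
      ∑ᶠ t : ℤ, if (M : ℤ) ∣ (t - m) then
        ((n : ℝ) - (t : ℝ) ^ 2) ^ j * (t : ℝ) ^ (2 * (k - j) + 1) * H ((n : ℤ) - t ^ 2)
      else 0


/-- The Rankin–Cohen bracket coefficients `d_{k,j} = (-1)^j binom(k+1/2, j) binom(k+1/2, k-j)`. -/
noncomputable def dRC (k j : ℕ) : ℝ :=
  (-1 : ℝ) ^ j * genBinom ((k : ℝ) + 1 / 2) j * genBinom ((k : ℝ) + 1 / 2) (k - j)

/-- `𝒞_k = Σ_{j=0}^{k} (-1)^j d_{k,j}`. -/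
noncomputable def CRC (k : ℕ) : ℝ :=
  ∑ j ∈ Finset.range (k + 1), (-1 : ℝ) ^ j * dRC k j

/-- The sum defining `Hs` is a finite sum over `|t| ≤ 4n`. -/
lemma finsum_eq_window (n : ℕ) (m : ℤ) (M : ℕ) (g : ℤ → ℝ)
    (hg : ∀ t : ℤ, 4 * (n : ℤ) - t ^ 2 < 0 → g t = 0) :
    (∑ᶠ t : ℤ, if (M : ℤ) ∣ (t - m) then g t else 0) =
      ∑ t ∈ Finset.Icc (-(4 * n : ℤ)) (4 * n), if (M : ℤ) ∣ (t - m) then g t else 0 := by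
  apply finsum_eq_sum_of_support_subset
  intro t ht
  rw [Function.mem_support] at ht
  have h1 : ¬ (4 * (n : ℤ) - t ^ 2 < 0) := by
    intro h
    apply ht
    simp [hg t h]
  simp only [Finset.coe_Icc, Set.mem_Icc]
  have h2 : t ^ 2 ≤ 4 * (n : ℤ) := by linarith
  constructor
  · by_contra h3
    push Not at h3
    nlinarith
  · by_contra h3
    push Not at h3
    nlinarith

lemma H_neg {x : ℤ} (hx : x < 0) : H x = 0 := by
  unfold H
  rw [if_neg hx.ne, if_pos hx]

lemma Hs_window (ν : ℕ) (m : ℤ) (M : ℕ) (n : ℕ) :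
    Hs ν m M n = ∑ t ∈ Finset.Icc (-(4 * n : ℤ)) (4 * n),
      if (M : ℤ) ∣ (t - m) then H (4 * (n : ℤ) - t ^ 2) * (t : ℝ) ^ ν else 0 := by
  unfold Hs
  apply finsum_eq_window n m M (fun t => H (4 * (n : ℤ) - t ^ 2) * (t : ℝ) ^ ν)
  intro t ht
  simp [H_neg ht]

lemma inner_expand (k j : ℕ) (hj : j ≤ k) (m : ℤ) (M : ℕ) (n : ℕ) :
    (∑ᶠ t : ℤ, if (M : ℤ) ∣ (t - m) then
        (((4 * n : ℕ) : ℝ) - (t : ℝ) ^ 2) ^ j * (t : ℝ) ^ (2 * (k - j) + 1)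
          * H (((4 * n : ℕ) : ℤ) - t ^ 2)
      else 0) =
    ∑ l ∈ Finset.range (j + 1), (-1 : ℝ) ^ (j + l) * (Nat.choose j l : ℝ) *
            (4 * (n : ℝ)) ^ l * Hs (2 * (k - l) + 1) m M n := by
  push_cast
  rw [finsum_eq_window n m M (fun t => ((4 * (n : ℝ)) - (t : ℝ) ^ 2) ^ j *
    (t : ℝ) ^ (2 * (k - j) + 1) * H (4 * (n : ℤ) - t ^ 2))
    (fun t ht => by simp [H_neg ht])]
  simp only [Hs_window, Finset.mul_sum]
  rw [Finset.sum_comm]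
  apply Finset.sum_congr rfl
  intro t _
  split_ifs with h
  · rw [sub_eq_add_neg, add_pow, Finset.sum_mul, Finset.sum_mul]
    apply Finset.sum_congr rfl
    intro l hl
    have hl' : l ≤ j := by
      have := Finset.mem_range.mp hl
      omega
    obtain ⟨a, rfl⟩ := Nat.exists_eq_add_of_le hl'
    obtain ⟨b, rfl⟩ := Nat.exists_eq_add_of_le hj
    have e1 : l + a - l = a := by omega
    have e2 : l + a + b - (l + a) = b := by omega
    have e3 : l + a + b - l = a + b := by omega
    rw [e1, e2, e3, neg_pow]
    have e4 : (-1 : ℝ) ^ (l + a + l) = (-1) ^ a := by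
      rw [show l + a + l = a + 2 * l by ring, pow_add, pow_mul]
      simp
    rw [e4]
    ring
  · simp

lemma genBinom_pos (k j : ℕ) (hj : j ≤ k) : 0 < genBinom ((k : ℝ) + 1 / 2) j := by
  unfold genBinom
  apply div_pos
  · apply Finset.prod_pos
    intro i hi
    have h1 : i ≤ k := by
      have := Finset.mem_range.mp hi
      omega
    have h2 : (i : ℝ) ≤ k := by exact_mod_cast h1
    linarith
  · exact_mod_cast Nat.factorial_pos j

lemma CRC_pos (k : ℕ) : 0 < CRC k := by
  unfold CRC
  apply Finset.sum_pos
  · intro j hj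
    have hjk : j ≤ k := by
      have := Finset.mem_range.mp hj
      omega
    have h1 := genBinom_pos k j hjk
    have h2 := genBinom_pos k (k - j) (by omega)
    have e : (-1 : ℝ) ^ j * dRC k j
        = genBinom ((k : ℝ) + 1 / 2) j * genBinom ((k : ℝ) + 1 / 2) (k - j) := by
      unfold dRC
      rw [← mul_assoc, ← mul_assoc, ← pow_add, ← two_mul, pow_mul]
      simp
    rw [e]
    exact mul_pos h1 h2
  · exact ⟨0, by simp⟩

lemma range_split (f : ℕ → ℝ) (j : ℕ) :
    ∑ l ∈ Finset.range (j + 1), f l = f 0 + ∑ l ∈ Finset.Icc 1 j, f l := by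
  rw [Finset.range_eq_Ico, Finset.sum_eq_sum_Ico_succ_bot (by omega)]
  rfl

/-- **Recursion for odd Hurwitz moments** (Lemma 4.1): `𝒞_k H_{2k+1,m,M}(n) =
c_{k,m,M}(4n) - Σ_{j=1}^{k} d_{k,j} Σ_{ℓ=1}^{j} (-1)^{j+ℓ} binom(j,ℓ) (4n)^ℓ
H_{2k-2ℓ+1,m,M}(n)`, and `𝒞_k > 0`. -/
theorem hurwitz_moment_recursion
    (k : ℕ) (m : ℤ) (M : ℕ) (hM : 0 < M) (n : ℕ) :
    CRC k * Hs (2 * k + 1) m M n =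
      cRC k m M (4 * n) -
        ∑ j ∈ Finset.Icc 1 k, dRC k j *
          ∑ l ∈ Finset.Icc 1 j, (-1 : ℝ) ^ (j + l) * (Nat.choose j l : ℝ) *
            (4 * (n : ℝ)) ^ l * Hs (2 * (k - l) + 1) m M n
    ∧ 0 < CRC k := by
  refine ⟨?_, CRC_pos k⟩
  have h1 : cRC k m M (4 * n) = ∑ j ∈ Finset.range (k + 1), (
      (-1 : ℝ) ^ j * dRC k j * Hs (2 * k + 1) m M n + dRC k j *
          ∑ l ∈ Finset.Icc 1 j, (-1 : ℝ) ^ (j + l) * (Nat.choose j l : ℝ) *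
            (4 * (n : ℝ)) ^ l * Hs (2 * (k - l) + 1) m M n) := by
    unfold cRC
    apply Finset.sum_congr rfl
    intro j hj
    have hjk : j ≤ k := by
      have := Finset.mem_range.mp hj
      omega
    rw [inner_expand k j hjk, range_split]
    unfold dRC
    simp only [Nat.choose_zero_right, add_zero, pow_zero, Nat.sub_zero, Nat.cast_one, mul_one]
    ring
  rw [h1, Finset.sum_add_distrib, ← Finset.sum_mul]
  rw [range_split (fun j => dRC k j * _) k]
  simp only [CRC, Finset.Icc_eq_empty_of_lt Nat.zero_lt_one, Finset.sum_empty]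
  ring

end HurwitzAP
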